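/- arXiv:2202.11808 — 2 statements merged into one kernel-verified Lean document; each statement's English description precedes it below -/
import Mathlib

section
/- Let c, c' ∈ ℤ_{>0}^n be vectors with c'_i ≥ c_i for all i, and let k be a positive integer with k < c_1+⋯+c_n. Then every coefficient of the Ehrhart polynomial of R_{k,c} is less than or equal to the corresponding coefficient of the Ehrhart polynomial of R_{k,c'}. -/
/-- The number of lattice points of the `t`-th dilate of the slice of prism `R_{k,c}`. -/
def sliceCount (n : ℕ) (c : Fin n → ℕ) (k t : ℕ) : ℕ :=
  ((Fintype.piFinset (fun i : Fin n => Finset.range (c i * t + 1))).filter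
    (fun x => ∑ i, x i = k * t)).card

namespace SliceAux

open PowerSeries

/-- size of the chosen subset -/
def jj {n : ℕ} (e : Fin n → Bool) : ℕ := ∑ i, (e i).toNat

/-- size of the complement of the chosen subset -/
def rr {n : ℕ} (e : Fin n → Bool) : ℕ := ∑ i, (!(e i)).toNat

/-- weight of the chosen subset -/
def cc {n : ℕ} (c : Fin n → ℕ) (e : Fin n → Bool) : ℕ := ∑ i, (e i).toNat * c i

/-- signed product of two rising factorials -/
noncomputable def phi (j r : ℕ) : Polynomial ℚ :=
  (∏ i ∈ Finset.range j, (-Polynomial.X + Polynomial.C (i : ℚ))) *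
    ∏ i ∈ Finset.range r, (Polynomial.X + Polynomial.C (i : ℚ))

lemma jj_add_rr {n : ℕ} (e : Fin n → Bool) : jj e + rr e = n := by
  unfold jj rr
  rw [← Finset.sum_add_distrib]
  have : ∀ i : Fin n, (e i).toNat + (!(e i)).toNat = 1 := by
    intro i; cases e i <;> rfl
  simp [this]

lemma phi_succ_left (j r : ℕ) :
    phi (j+1) r = phi j r * (-Polynomial.X + Polynomial.C (j : ℚ)) := by
  unfold phi; rw [Finset.prod_range_succ]; ring

lemma phi_succ_right (j r : ℕ) :
    phi j (r+1) = phi j r * (Polynomial.X + Polynomial.C (r : ℚ)) := by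
  unfold phi; rw [Finset.prod_range_succ]; ring

lemma phi_left_coeff_succ (j r m : ℕ) :
    (phi (j+1) r).coeff (m+1) = - (phi j r).coeff m + j * (phi j r).coeff (m+1) := by
  rw [phi_succ_left, mul_add, mul_neg, Polynomial.coeff_add, Polynomial.coeff_neg,
    Polynomial.coeff_mul_X, Polynomial.coeff_mul_C]; ring

lemma phi_left_coeff_zero (j r : ℕ) :
    (phi (j+1) r).coeff 0 = j * (phi j r).coeff 0 := by
  rw [phi_succ_left, mul_add, mul_neg, Polynomial.coeff_add, Polynomial.coeff_neg,
    Polynomial.coeff_mul_X_zero, Polynomial.coeff_mul_C]; ring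

lemma phi_right_coeff_succ (j r m : ℕ) :
    (phi j (r+1)).coeff (m+1) = (phi j r).coeff m + r * (phi j r).coeff (m+1) := by
  rw [phi_succ_right, mul_add, Polynomial.coeff_add,
    Polynomial.coeff_mul_X, Polynomial.coeff_mul_C]; ring

lemma phi_right_coeff_zero (j r : ℕ) :
    (phi j (r+1)).coeff 0 = r * (phi j r).coeff 0 := by
  rw [phi_succ_right, mul_add, Polynomial.coeff_add,
    Polynomial.coeff_mul_X_zero, Polynomial.coeff_mul_C]; ring

lemma phi_coeff_zero (j r : ℕ) (h : 0 < j + r) : (phi j r).coeff 0 = 0 := by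
  rw [Polynomial.coeff_zero_eq_eval_zero]
  unfold phi
  rw [Polynomial.eval_mul, Polynomial.eval_prod, Polynomial.eval_prod]
  rcases Nat.eq_zero_or_pos j with hj | hj
  · have hr : 0 < r := by omega
    rw [mul_eq_zero]; right
    exact Finset.prod_eq_zero (Finset.mem_range.2 hr) (by simp)
  · rw [mul_eq_zero]; left
    exact Finset.prod_eq_zero (Finset.mem_range.2 hj) (by simp)

/-- the signed generating function -/
noncomputable def F (n : ℕ) (c : Fin n → ℕ) (m : ℕ) : ℚ⟦X⟧ :=
  ∑ e : Fin n → Bool, (X : ℚ⟦X⟧) ^ (cc c e) * C ((phi (jj e) (rr e)).coeff m)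

/-- generating function of compatible weighted permutations, by recursion on the last element -/
noncomputable def H : (n : ℕ) → (Fin n → ℕ) → ℕ → ℚ⟦X⟧
  | 0, _, m => if m = 0 then 1 else 0
  | n+1, c, 0 => ∑ i : Fin n, H n (Function.update (Fin.tail c) i (Fin.tail c i + c 0)) 0
  | n+1, c, m+1 => (∑ i ∈ Finset.range (c 0), (X : ℚ⟦X⟧) ^ i) * H n (Fin.tail c) m +
      ∑ i : Fin n, H n (Function.update (Fin.tail c) i (Fin.tail c i + c 0)) (m+1)

lemma sum_split {n : ℕ} {M : Type*} [AddCommMonoid M] (f : (Fin (n+1) → Bool) → M) :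
    ∑ e, f e = ∑ e : Fin n → Bool, (f (Fin.cons true e) + f (Fin.cons false e)) := by
  rw [← (Fin.consEquiv (fun _ : Fin (n+1) => Bool)).sum_comp, Fintype.sum_prod_type,
    Fintype.sum_bool, ← Finset.sum_add_distrib]
  rfl

lemma jj_cons {n : ℕ} (b : Bool) (e : Fin n → Bool) :
    jj (Fin.cons b e : Fin (n+1) → Bool) = jj e + b.toNat := by
  unfold jj; rw [Fin.sum_univ_succ]; simp [add_comm]

lemma rr_cons {n : ℕ} (b : Bool) (e : Fin n → Bool) :
    rr (Fin.cons b e : Fin (n+1) → Bool) = rr e + (!b).toNat := by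
  unfold rr; rw [Fin.sum_univ_succ]; simp [add_comm]

lemma cc_cons {n : ℕ} (c : Fin (n+1) → ℕ) (b : Bool) (e : Fin n → Bool) :
    cc c (Fin.cons b e : Fin (n+1) → Bool) = cc (Fin.tail c) e + b.toNat * c 0 := by
  unfold cc; rw [Fin.sum_univ_succ]; simp [add_comm, Fin.tail]

lemma cc_update {n : ℕ} (c : Fin n → ℕ) (i : Fin n) (a : ℕ) (e : Fin n → Bool) :
    cc (Function.update c i (c i + a)) e = cc c e + (e i).toNat * a := by
  unfold cc
  have : ∀ l, (e l).toNat * Function.update c i (c i + a) l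
      = (e l).toNat * c l + if l = i then (e i).toNat * a else 0 := by
    intro l
    by_cases h : l = i
    · subst h; simp [mul_add]
    · simp [h]
  simp [this, Finset.sum_add_distrib]

lemma sum_pow {n : ℕ} (e : Fin n → Bool) (a : ℕ) :
    ∑ i, (X : ℚ⟦X⟧) ^ ((e i).toNat * a) = (rr e : ℚ⟦X⟧) + (jj e : ℚ⟦X⟧) * X ^ a := by
  unfold rr jj
  push_cast
  rw [Finset.sum_mul, ← Finset.sum_add_distrib]
  refine Finset.sum_congr rfl fun i _ => ?_
  cases e i <;> simp

lemma sum_F_update {n : ℕ} (c : Fin n → ℕ) (a m : ℕ) :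
    ∑ i, F n (Function.update c i (c i + a)) m =
      ∑ e : Fin n → Bool, (X : ℚ⟦X⟧) ^ (cc c e) * C ((phi (jj e) (rr e)).coeff m) *
        ((rr e : ℚ⟦X⟧) + (jj e : ℚ⟦X⟧) * X ^ a) := by
  unfold F
  rw [Finset.sum_comm]
  refine Finset.sum_congr rfl fun e _ => ?_
  rw [← sum_pow, Finset.mul_sum]
  refine Finset.sum_congr rfl fun i _ => ?_
  rw [cc_update, pow_add]; ring

lemma F_succ_zero {n : ℕ} (c : Fin (n+1) → ℕ) :
    F (n+1) c 0 = ∑ i, F n (Function.update (Fin.tail c) i (Fin.tail c i + c 0)) 0 := by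
  rw [sum_F_update]
  unfold F
  rw [sum_split]
  refine Finset.sum_congr rfl fun e _ => ?_
  simp only [jj_cons, rr_cons, cc_cons, Bool.toNat_true, Bool.toNat_false, Bool.not_true,
    Bool.not_false, add_zero, zero_mul, one_mul, phi_left_coeff_zero, phi_right_coeff_zero,
    map_mul, map_natCast, pow_add]
  ring

lemma F_succ_succ {n : ℕ} (c : Fin (n+1) → ℕ) (m : ℕ) :
    F (n+1) c (m+1) = (1 - X ^ (c 0)) * F n (Fin.tail c) m +
      ∑ i, F n (Function.update (Fin.tail c) i (Fin.tail c i + c 0)) (m+1) := by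
  rw [sum_F_update]
  unfold F
  rw [sum_split, Finset.mul_sum, ← Finset.sum_add_distrib]
  refine Finset.sum_congr rfl fun e _ => ?_
  simp only [jj_cons, rr_cons, cc_cons, Bool.toNat_true, Bool.toNat_false, Bool.not_true,
    Bool.not_false, add_zero, zero_mul, one_mul, phi_left_coeff_succ, phi_right_coeff_succ,
    map_mul, map_natCast, pow_add, map_add, map_neg]
  ring

lemma F_eq_H (n : ℕ) : ∀ (c : Fin n → ℕ) (m : ℕ), F n c m = (1 - X) ^ m * H n c m := by
  induction n with
  | zero =>
    intro c m
    have : phi 0 0 = 1 := by simp [phi]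
    rcases m with _ | m <;> simp [F, H, cc, jj, rr, this, Polynomial.coeff_one]
  | succ n ih =>
    intro c m
    rcases m with _ | m
    · rw [F_succ_zero]; simp [H, ih]
    · rw [F_succ_succ, H, ih, ← mul_neg_geom_sum]
      simp only [ih]
      rw [← Finset.mul_sum]; ring

/-- coefficientwise order -/
def LE' (f g : ℚ⟦X⟧) : Prop := ∀ l, coeff l f ≤ coeff l g

lemma LE'.sum {ι : Type*} (s : Finset ι) {f g : ι → ℚ⟦X⟧} (h : ∀ i, LE' (f i) (g i)) :
    LE' (∑ i ∈ s, f i) (∑ i ∈ s, g i) := by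
  intro l; simp only [map_sum]; exact Finset.sum_le_sum fun i _ => h i l

lemma LE'.add {f g f' g' : ℚ⟦X⟧} (h : LE' f g) (h' : LE' f' g') : LE' (f + f') (g + g') := by
  intro l; simp only [map_add]; exact add_le_add (h l) (h' l)

lemma LE'.mul {f g f' g' : ℚ⟦X⟧} (h : LE' f g) (h' : LE' f' g') (hf' : LE' 0 f')
    (hg : LE' 0 g) : LE' (f * f') (g * g') := by
  intro l; simp only [coeff_mul]
  refine Finset.sum_le_sum fun x _ => ?_
  have h1 := hf' x.2
  have h2 := hg x.1
  simp only [map_zero] at h1 h2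
  exact mul_le_mul (h _) (h' _) h1 h2

lemma geom_nonneg (a : ℕ) : LE' 0 (∑ i ∈ Finset.range a, (X : ℚ⟦X⟧) ^ i) := by
  intro l; simp only [map_zero, map_sum, coeff_X_pow]
  exact Finset.sum_nonneg fun i _ => by split_ifs <;> norm_num

lemma geom_mono {a b : ℕ} (h : a ≤ b) :
    LE' (∑ i ∈ Finset.range a, (X : ℚ⟦X⟧) ^ i) (∑ i ∈ Finset.range b, (X : ℚ⟦X⟧) ^ i) := by
  intro l; simp only [map_sum, coeff_X_pow]
  exact Finset.sum_le_sum_of_subset_of_nonneg (Finset.range_mono h)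
    fun i _ _ => by split_ifs <;> norm_num

lemma H_nonneg (n : ℕ) : ∀ (c : Fin n → ℕ) (m : ℕ), LE' 0 (H n c m) := by
  induction n with
  | zero =>
    intro c m l
    simp only [H]
    split_ifs
    · simp only [map_zero, coeff_one]; split_ifs <;> norm_num
    · rfl
  | succ n ih =>
    intro c m
    rcases m with _ | m
    · have := LE'.sum (f := fun _ => 0) Finset.univ
        fun i => ih (Function.update (Fin.tail c) i (Fin.tail c i + c 0)) 0
      simpa [H] using this
    · have := LE'.add (LE'.mul (geom_nonneg (c 0)) (ih (Fin.tail c) m) (fun _ => le_rfl)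
          (geom_nonneg (c 0))) (LE'.sum (f := fun _ => 0) Finset.univ
        fun i => ih (Function.update (Fin.tail c) i (Fin.tail c i + c 0)) (m+1))
      simpa [H] using this

lemma H_mono (n : ℕ) : ∀ (c c' : Fin n → ℕ) (_ : ∀ i, c i ≤ c' i) (m : ℕ),
    LE' (H n c m) (H n c' m) := by
  induction n with
  | zero => intro c c' _ m l; simp only [H]; rfl
  | succ n ih =>
    intro c c' h m
    have key : ∀ i l, Function.update (Fin.tail c) i (Fin.tail c i + c 0) l ≤
        Function.update (Fin.tail c') i (Fin.tail c' i + c' 0) l := by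
      intro i l
      by_cases hl : l = i
      · subst hl; simpa [Fin.tail] using add_le_add (h _) (h 0)
      · simpa [hl, Fin.tail] using h _
    rcases m with _ | m
    · simp only [H]
      exact LE'.sum _ fun i => ih _ _ (key i) 0
    · simp only [H]
      exact LE'.add (LE'.mul (geom_mono (h 0)) (ih _ _ (fun i => h _) m) (H_nonneg _ _ _)
        (geom_nonneg _)) (LE'.sum _ fun i => ih _ _ (key i) (m+1))

/-- the power sum series -/
noncomputable def B (m : ℕ) : ℚ⟦X⟧ := mk fun y => if y = 0 then 0 else (y : ℚ) ^ m

lemma B_succ (m : ℕ) : B (m+1) = X * derivative ℚ (B m) := by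
  ext y
  rcases y with _ | y
  · simp [B]
  · rw [coeff_succ_X_mul, coeff_derivative]; simp [B, pow_succ]

lemma B_zero : B 0 * (1 - X) = X := by
  have : B 0 = X * mk 1 := by
    ext y
    rcases y with _ | y
    · simp [B]
    · rw [coeff_succ_X_mul]; simp [B]
  rw [this, mul_assoc, mk_one_mul_one_sub_eq_one, mul_one]

lemma E_succ (m : ℕ) : B (m+1) * (1 - X) ^ (m+2) =
    X * (1 - X) * derivative ℚ (B m * (1 - X) ^ (m+1)) +
      ((m + 1 : ℕ) : ℚ⟦X⟧) * X * (B m * (1 - X) ^ (m+1)) := by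
  have hd : derivative ℚ ((1 - X : ℚ⟦X⟧) ^ (m+1)) = - ((m + 1 : ℕ) : ℚ⟦X⟧) * (1 - X) ^ m := by
    rw [Derivation.leibniz_pow, map_sub, derivative_X]
    simp
    ring
  rw [B_succ, Derivation.leibniz, hd]
  simp only [smul_eq_mul]
  ring

lemma E_spec (m : ℕ) : ∀ y, 0 ≤ coeff y (B m * (1 - X) ^ (m+1)) ∧
    (m + 1 < y → coeff y (B m * (1 - X) ^ (m+1)) = 0) := by
  induction m with
  | zero =>
    intro y
    simp only [zero_add, pow_one, B_zero, coeff_X]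
    constructor
    · split_ifs <;> norm_num
    · intro h; rw [if_neg (by omega)]
  | succ m ih =>
    intro y
    rw [E_succ]
    generalize B m * (1 - X) ^ (m+1) = E at ih ⊢
    have e : X * (1 - X) * derivative ℚ E + ((m + 1 : ℕ) : ℚ⟦X⟧) * X * E =
      X * (derivative ℚ E - X * derivative ℚ E + C ((m + 1 : ℕ) : ℚ) * E) := by
      rw [map_natCast]; ring
    rw [e]
    rcases y with _ | y
    · simp
    · rw [coeff_succ_X_mul, map_add, map_sub, coeff_C_mul, coeff_derivative]
      have h3 : coeff y (X * derivative ℚ E) = y * coeff y E := by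
        rcases y with _ | y
        · simp
        · rw [coeff_succ_X_mul, coeff_derivative]; push_cast; ring
      rw [h3]
      have e2 : coeff (y+1) E * ((y:ℚ) + 1) - y * coeff y E + ((m + 1 : ℕ) : ℚ) * coeff y E
        = coeff (y+1) E * ((y:ℚ) + 1) + ((m:ℚ) + 1 - y) * coeff y E := by push_cast; ring
      rw [e2]
      constructor
      · have h1 := (ih (y+1)).1
        have h2 : 0 ≤ ((m:ℚ) + 1 - y) * coeff y E := by
          by_cases hy : m + 1 < y
          · rw [(ih y).2 hy]; simp
          · have : (y:ℚ) ≤ m + 1 := by exact_mod_cast not_lt.1 hy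
            exact mul_nonneg (by linarith) (ih y).1
        positivity
      · intro hy
        rw [(ih (y+1)).2 (by omega), (ih y).2 (by omega)]; simp

lemma coeff_mono (n k m : ℕ) (c c' : Fin n → ℕ) (h : ∀ i, c i ≤ c' i) :
    coeff k (B m * F n c (m+1)) ≤ coeff k (B m * F n c' (m+1)) := by
  rw [F_eq_H, F_eq_H, ← mul_assoc, ← mul_assoc]
  have hE : LE' 0 (B m * (1 - X) ^ (m+1)) := fun y => by simpa using (E_spec m y).1
  exact LE'.mul (fun _ => le_rfl) (H_mono n c c' h (m+1)) (H_nonneg _ _ _) hE k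

lemma coeff_BF (n k m : ℕ) (c : Fin n → ℕ) :
    coeff k (B m * F n c (m+1)) = ∑ e : Fin n → Bool,
      if cc c e < k then ((k - cc c e : ℕ) : ℚ) ^ m * (phi (jj e) (rr e)).coeff (m+1) else 0 := by
  unfold F
  rw [Finset.mul_sum, map_sum]
  refine Finset.sum_congr rfl fun e _ => ?_
  rw [← mul_assoc, coeff_mul_C, mul_comm (B m), coeff_X_pow_mul']
  unfold B
  rw [coeff_mk]
  split_ifs <;> first | omega | simp

lemma phi_eval (j r N : ℕ) (hN : 0 < N) (hn : 0 < j + r) :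
    (phi j r).eval (N : ℚ) = N * ((j + r - 1).factorial : ℚ) * ((-1) ^ j *
      if j ≤ N then (((j + r - 1) + (N - j)).choose (j + r - 1) : ℚ) else 0) := by
  have h1 : (∏ i ∈ Finset.range j, (-(N:ℚ) + i)) = (-1) ^ j * (N.descFactorial j : ℚ) := by
    clear hn
    induction j with
    | zero => simp
    | succ j ih =>
      rw [Finset.prod_range_succ, ih, Nat.descFactorial_succ]
      by_cases h : j ≤ N
      · push_cast [Nat.cast_sub h]; ring
      · rw [Nat.descFactorial_eq_zero_iff_lt.2 (by omega)]; simp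
  have h2 : (∏ i ∈ Finset.range r, ((N:ℚ) + i)) = (N.ascFactorial r : ℚ) := by
    rw [Nat.ascFactorial_eq_prod_range]; push_cast; rfl
  have h3 : (phi j r).eval (N : ℚ) = (-1) ^ j * (N.descFactorial j : ℚ) * (N.ascFactorial r : ℚ) := by
    rw [← h1, ← h2]; simp [phi, Polynomial.eval_prod]
  rw [h3]
  split_ifs with h
  · have key : N.descFactorial j * N.ascFactorial r =
        N * (j + r - 1).factorial * ((j + r - 1) + (N - j)).choose (j + r - 1) := by
      obtain ⟨M, rfl⟩ : ∃ M, N = M + 1 := ⟨N - 1, by omega⟩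
      have a1 := Nat.factorial_mul_descFactorial h
      have a2 := Nat.factorial_mul_ascFactorial M r
      have a3 := Nat.add_choose_mul_factorial_mul_factorial (M + 1 - j) (j + r - 1)
      rw [add_comm (j + r - 1)]
      have e : M + 1 - j + (j + r - 1) = M + r := by omega
      rw [e] at a3 ⊢
      have p1 := Nat.factorial_pos (M + 1 - j)
      have p2 := Nat.factorial_pos M
      rw [Nat.factorial_succ] at a1
      apply Nat.eq_of_mul_eq_mul_left (Nat.mul_pos p1 p2)
      calc _ = ((M + 1 - j).factorial * (M+1).descFactorial j) *
            (M.factorial * (M+1).ascFactorial r) := by ring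
        _ = _ := by rw [a1, a2, ← a3]; ring
    have key' : (N.descFactorial j : ℚ) * N.ascFactorial r =
        N * (j + r - 1).factorial * ((j + r - 1) + (N - j)).choose (j + r - 1) := by
      exact_mod_cast key
    rw [mul_assoc, key']; ring
  · rw [Nat.descFactorial_eq_zero_iff_lt.2 (by omega)]; simp

lemma count_eq (n k t : ℕ) (c : Fin (n+1) → ℕ) :
    (sliceCount (n+1) c k t : ℚ) = ∑ e : Fin (n+1) → Bool, (-1) ^ (jj e) *
      if cc c e * t + jj e ≤ k * t then
        ((n + (k * t - (cc c e * t + jj e))).choose n : ℚ) else 0 := by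
  have h1 : (sliceCount (n+1) c k t : ℚ) =
      coeff (k*t) (∏ i, ∑ x ∈ Finset.range (c i * t + 1), (X : ℚ⟦X⟧) ^ x) := by
    rw [Finset.prod_univ_sum, map_sum]
    simp only [Finset.prod_pow_eq_pow_sum, coeff_X_pow]
    rw [sliceCount, Finset.card_filter]
    push_cast
    exact Finset.sum_congr rfl fun x _ => by simp [eq_comm]
  have h2 : ∀ a : ℕ, ∑ x ∈ Finset.range a, (X : ℚ⟦X⟧) ^ x = (1 - X ^ a) * mk 1 := by
    intro a
    rw [← mul_neg_geom_sum]
    calc _ = (∑ x ∈ Finset.range a, (X : ℚ⟦X⟧) ^ x) * (mk 1 * (1 - X)) := by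
          rw [mk_one_mul_one_sub_eq_one, mul_one]
      _ = _ := by ring
  have h3 : ∀ a : ℕ, (1 - X ^ a : ℚ⟦X⟧) = ∑ b : Bool, (-1) ^ b.toNat * X ^ (b.toNat * a) := by
    intro a; rw [Fintype.sum_bool]; simp; ring
  rw [h1]
  simp only [h2, Finset.prod_mul_distrib, Finset.prod_const, Finset.card_univ, Fintype.card_fin]
  rw [mk_one_pow_eq_mk_choose_add]
  simp only [h3]
  rw [Finset.prod_univ_sum, Fintype.piFinset_univ, Finset.sum_mul, map_sum]
  refine Finset.sum_congr rfl fun e _ => ?_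
  rw [Finset.prod_mul_distrib, Finset.prod_pow_eq_pow_sum, Finset.prod_pow_eq_pow_sum]
  have e1 : ∑ i, (e i).toNat * (c i * t + 1) = cc c e * t + jj e := by
    unfold cc jj
    rw [Finset.sum_mul, ← Finset.sum_add_distrib]
    exact Finset.sum_congr rfl fun i _ => by ring
  have e2 : ∑ i, (e i).toNat = jj e := rfl
  rw [e1, e2]
  have e3 : ((-1 : ℚ⟦X⟧)) ^ jj e = C ((-1) ^ jj e) := by simp
  rw [e3, mul_assoc, coeff_C_mul, coeff_X_pow_mul']
  simp

/-- explicit polynomial -/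
noncomputable def P (n : ℕ) (c : Fin n → ℕ) (k : ℕ) : Polynomial ℚ :=
  ∑ e : Fin n → Bool, if cc c e < k then
    (phi (jj e) (rr e)).divX.comp (Polynomial.C ((k - cc c e : ℕ) : ℚ) * Polynomial.X) else 0

lemma P_coeff (n k m : ℕ) (c : Fin n → ℕ) :
    (P n c k).coeff m = coeff k (B m * F n c (m+1)) := by
  rw [coeff_BF, P, Polynomial.finsetSum_coeff]
  refine Finset.sum_congr rfl fun e _ => ?_
  split_ifs
  · rw [Polynomial.comp_C_mul_X_coeff, Polynomial.coeff_divX, mul_comm]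
  · simp

lemma P_eval (n k t : ℕ) (c : Fin (n+1) → ℕ) (hk : 0 < k) (ht : 0 < t) (hc : ∀ i, 0 < c i) :
    (P (n+1) c k).eval (t : ℚ) = n.factorial * sliceCount (n+1) c k t := by
  rw [count_eq, P, Polynomial.eval_finsetSum, Finset.mul_sum]
  refine Finset.sum_congr rfl fun e _ => ?_
  have hjr := jj_add_rr e
  split_ifs with h1 h2 h2
  · obtain ⟨y, hy⟩ : ∃ y, k = cc c e + y := ⟨k - cc c e, by omega⟩
    have hN : 0 < y * t := Nat.mul_pos (by omega) ht
    have h := phi_eval (jj e) (rr e) (y * t) hN (by omega)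
    have hd := Polynomial.divX_mul_X_add (phi (jj e) (rr e))
    rw [phi_coeff_zero _ _ (by omega)] at hd
    rw [← hd] at h
    have e1 : k * t - (cc c e * t + jj e) = y * t - jj e := by rw [hy, add_mul]; omega
    have e2 : jj e ≤ y * t := by rw [hy, add_mul] at h2; omega
    have e3 : k - cc c e = y := by omega
    have hN' : ((y * t : ℕ) : ℚ) ≠ 0 := by exact_mod_cast hN.ne'
    rw [e1, e3, Polynomial.eval_comp]
    rw [hjr, if_pos e2] at h
    apply mul_left_cancel₀ hN'
    simp only [Polynomial.eval_add, Polynomial.eval_mul, Polynomial.eval_X, Polynomial.eval_C,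
      add_zero, Nat.add_sub_cancel, Nat.cast_mul] at h ⊢
    linear_combination h
  · obtain ⟨y, hy⟩ : ∃ y, k = cc c e + y := ⟨k - cc c e, by omega⟩
    have hN : 0 < y * t := Nat.mul_pos (by omega) ht
    have h := phi_eval (jj e) (rr e) (y * t) hN (by omega)
    have hd := Polynomial.divX_mul_X_add (phi (jj e) (rr e))
    rw [phi_coeff_zero _ _ (by omega)] at hd
    rw [← hd] at h
    have e2 : ¬ jj e ≤ y * t := by rw [hy, add_mul] at h2; omega
    have e3 : k - cc c e = y := by omega
    have hN' : ((y * t : ℕ) : ℚ) ≠ 0 := by exact_mod_cast hN.ne'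
    rw [e3, Polynomial.eval_comp]
    rw [hjr, if_neg e2] at h
    apply mul_left_cancel₀ hN'
    simp at h ⊢
    tauto
  · exfalso
    have h4 : k * t ≤ cc c e * t := Nat.mul_le_mul_right _ (by omega)
    have h5 : jj e = 0 := by omega
    have h6 : cc c e = 0 := by
      unfold jj at h5
      unfold cc
      rw [Finset.sum_eq_zero_iff] at h5
      exact Finset.sum_eq_zero fun i hi => by rw [h5 i hi, zero_mul]
    omega
  · simp

lemma P_eq (n k : ℕ) (c : Fin (n+1) → ℕ) (hk : 0 < k) (hc : ∀ i, 0 < c i) (p : Polynomial ℚ)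
    (hp : ∀ t : ℕ, 0 < t → p.eval (t : ℚ) = sliceCount (n+1) c k t) :
    P (n+1) c k = Polynomial.C (n.factorial : ℚ) * p := by
  apply Polynomial.eq_of_infinite_eval_eq
  have : Set.InjOn (fun t : ℕ => (t : ℚ)) (Set.Ioi 0) := Nat.cast_injective.injOn
  refine ((Set.Ioi_infinite (0:ℕ)).image this).mono ?_
  rintro _ ⟨t, ht, rfl⟩
  simp only [Set.mem_ofPred_eq]
  rw [P_eval n k t c hk ht hc, Polynomial.eval_mul, Polynomial.eval_C, hp t ht]

end SliceAux

theorem stmt14 (n k : ℕ) (c c' : Fin n → ℕ) (hc : ∀ i, 0 < c i)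
    (hcc : ∀ i, c i ≤ c' i) (hk0 : 0 < k) (hk : k < ∑ i, c i)
    (p q : Polynomial ℚ)
    (hp : ∀ t : ℕ, 0 < t → p.eval (t : ℚ) = sliceCount n c k t)
    (hq : ∀ t : ℕ, 0 < t → q.eval (t : ℚ) = sliceCount n c' k t) :
    ∀ m, p.coeff m ≤ q.coeff m := by
  intro m
  rcases n with _ | n
  · simp at hk
  have h1 := SliceAux.P_eq n k c hk0 hc p hp
  have h2 := SliceAux.P_eq n k c' hk0 (fun i => lt_of_lt_of_le (hc i) (hcc i)) q hq
  have h := SliceAux.coeff_mono (n+1) k m c c' hcc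
  rw [← SliceAux.P_coeff, ← SliceAux.P_coeff, h1, h2, Polynomial.coeff_C_mul,
    Polynomial.coeff_C_mul] at h
  exact le_of_mul_le_mul_left h (by exact_mod_cast n.factorial_pos)
end

section
/- For positive integers k ≤ n, the normalized volume of the hypersimplex Δ_{k,n} = {x ∈ [0,1]^n : ∑ x_i = k} equals the Eulerian number A(n−1, k−1), i.e., (n−1)! · vol(Δ_{k,n}) = #{σ ∈ S_{n−1} : σ has exactly k−1 descents}, where vol is the (n−1)-dimensional volume computed in the lattice induced on the hyperplane ∑ x_i = k. -/
open scoped Classical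

/-- The number of descents of a permutation `σ` of `Fin m`. -/
noncomputable def descNum {m : ℕ} (σ : Equiv.Perm (Fin m)) : ℕ :=
  (Finset.univ.filter
    (fun j : Fin m => ∃ h : (j : ℕ) + 1 < m, σ ⟨(j : ℕ) + 1, h⟩ < σ j)).card

/-- The Eulerian number `A(m,i)`. -/
noncomputable def eulerian (m i : ℕ) : ℕ :=
  Nat.card {σ : Equiv.Perm (Fin m) // descNum σ = i}

noncomputable def desF {m : ℕ} (y : Fin m → ℕ) : ℕ :=
  (Finset.univ.filter
    (fun j : Fin m => ∃ h : (j : ℕ) + 1 < m, y ⟨(j : ℕ) + 1, h⟩ < y j)).card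

def extY {m : ℕ} (y : Fin m → ℕ) : ℕ → ℕ
  | 0 => 0
  | i + 1 => if h : i < m then y ⟨i, h⟩ else 0

def dif (t : ℕ) (Y : ℕ → ℕ) (i : ℕ) : ℕ :=
  if Y i ≤ Y (i+1) then Y (i+1) - Y i else Y (i+1) + t - Y i

abbrev box (m t : ℕ) : Finset (Fin m → ℕ) := Fintype.piFinset (fun _ : Fin m => Finset.range t)

lemma extY_lt {m t : ℕ} (ht : 0 < t) {y : Fin m → ℕ} (hy : y ∈ box m t) (i : ℕ) : extY y i < t := by
  simp [box] at hy
  cases i with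
  | zero => simpa [extY]
  | succ i => 
    simp only [extY]; split_ifs
    · exact hy _
    · exact ht

lemma dif_lt {t : ℕ} {Y : ℕ → ℕ} (hY : ∀ i, Y i < t) (i : ℕ) : dif t Y i < t := by
  have := hY i; have := hY (i+1)
  unfold dif; split_ifs <;> omega

lemma sum_dif {t : ℕ} {Y : ℕ → ℕ} (h0 : Y 0 = 0) (hY : ∀ i, Y i < t) (l : ℕ) :
    ∑ i ∈ Finset.range l, dif t Y i
      = t * ((Finset.range l).filter (fun i => Y (i+1) < Y i)).card + Y l := by
  induction l with
  | zero => simp [h0]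
  | succ l ih =>
    rw [Finset.sum_range_succ, ih, Finset.range_add_one, Finset.filter_insert]
    have := hY l; have := hY (l+1)
    by_cases h : Y (l+1) < Y l
    · rw [if_pos h, Finset.card_insert_of_notMem (by simp)]
      have : dif t Y l = Y (l+1) + t - Y l := by unfold dif; rw [if_neg (by omega)]
      rw [this, mul_add]; omega
    · rw [if_neg h]
      have : dif t Y l = Y (l+1) - Y l := by unfold dif; rw [if_pos (by omega)]
      rw [this]; omega

lemma dif_inj {t : ℕ} {Y Z : ℕ → ℕ} (hY : ∀ i, Y i < t) (hZ : ∀ i, Z i < t) (i : ℕ)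
    (h : Y i = Z i) (hd : dif t Y i = dif t Z i) : Y (i+1) = Z (i+1) := by
  have := hY i; have := hY (i+1); have := hZ i; have := hZ (i+1)
  unfold dif at hd; split_ifs at hd <;> omega

lemma card_extY {m : ℕ} (y : Fin m → ℕ) :
    ((Finset.range m).filter (fun i => extY y (i+1) < extY y i)).card = desF y := by
  symm
  unfold desF
  refine Finset.card_bij (fun j _ => (j : ℕ) + 1) ?_ ?_ ?_
  · intro j hj
    simp only [Finset.mem_filter, Finset.mem_univ, true_and] at hj
    obtain ⟨h, hj⟩ := hj
    rw [Finset.mem_filter]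
    refine ⟨Finset.mem_range.2 h, ?_⟩
    show extY y ((j : ℕ) + 1 + 1) < extY y ((j : ℕ) + 1)
    simp only [extY, h, dif_pos, j.2]
    exact hj
  · intro a _ b _ h
    exact Fin.ext (by simpa using h)
  · intro b hb
    simp only [Finset.mem_filter, Finset.mem_range] at hb
    obtain ⟨h, hb⟩ := hb
    cases b with
    | zero => simp [extY] at hb
    | succ b =>
      refine ⟨⟨b, by omega⟩, ?_, rfl⟩
      simp only [extY, h, dif_pos, show b < m by omega] at hb
      simp [h, hb]

def Phi (m t : ℕ) (y : Fin m → ℕ) : Fin m → ℕ := fun i => dif t (extY y) i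

lemma Phi_mem {m t : ℕ} (ht : 0 < t) {y} (hy : y ∈ box m t) : Phi m t y ∈ box m t := by
  simp [box, Phi]
  intro i
  exact dif_lt (extY_lt ht hy) i

lemma Phi_inj {m t : ℕ} (ht : 0 < t) : Set.InjOn (Phi m t) (box m t : Set (Fin m → ℕ)) := by
  intro y hy z hz h
  have key : ∀ i ≤ m, extY y i = extY z i := by
    intro i
    induction i with
    | zero => intro _; rfl
    | succ i ih =>
      intro hi
      exact dif_inj (extY_lt ht hy) (extY_lt ht hz) i (ih (by omega)) (congrFun h ⟨i, hi⟩)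
  funext i
  have := key (i+1) i.2
  simpa [extY] using this

lemma Phi_sum {m t : ℕ} (ht : 0 < t) {y} (hy : y ∈ box m t) :
    (∑ i, Phi m t y i) / t = desF y := by
  have : ∑ i, Phi m t y i = ∑ i ∈ Finset.range m, dif t (extY y) i := by
    rw [Finset.sum_range]; rfl
  rw [this, sum_dif rfl (extY_lt ht hy), card_extY, Nat.mul_add_div ht,
    Nat.div_eq_of_lt (extY_lt ht hy _), add_zero]

lemma card_E {m t : ℕ} (ht : 0 < t) (d : ℕ) :
    ((box m t).filter (fun x => (∑ i, x i) / t = d)).card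
      = ((box m t).filter (fun y => desF y = d)).card := by
  symm
  have himg : (box m t).image (Phi m t) = box m t := by
    apply Finset.eq_of_subset_of_card_le
    · intro x hx
      obtain ⟨y, hy, rfl⟩ := Finset.mem_image.1 hx
      exact Phi_mem ht hy
    · rw [Finset.card_image_of_injOn (Phi_inj ht)]
  refine Finset.card_bij (fun y _ => Phi m t y) ?_ ?_ ?_
  · intro y hy
    rw [Finset.mem_filter] at hy ⊢
    exact ⟨Phi_mem ht hy.1, by rw [Phi_sum ht hy.1, hy.2]⟩
  · intro a ha b hb h
    exact Phi_inj ht (Finset.mem_filter.1 ha).1 (Finset.mem_filter.1 hb).1 h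
  · intro x hx
    rw [Finset.mem_filter] at hx
    have := hx.1
    rw [← himg] at this
    obtain ⟨y, hy, rfl⟩ := Finset.mem_image.1 this
    refine ⟨y, ?_, rfl⟩
    rw [Finset.mem_filter]
    exact ⟨hy, by rw [← Phi_sum ht hy, hx.2]⟩

lemma card_P' {m t k : ℕ} (ht : 0 < t) (hk : 0 < k) :
    (((box (m+1) (t+1)).filter (fun x => ∑ i, x i = k * t)).filter
      (fun x => (∀ i : Fin m, x i.castSucc < t) ∧ 0 < x (Fin.last m))).card
    = ((box m t).filter (fun x => (∑ i, x i) / t = k - 1)).card := by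
  obtain ⟨k, rfl⟩ : ∃ k', k = k' + 1 := ⟨k - 1, by omega⟩
  refine Finset.card_bij (fun x _ => fun i => x i.castSucc) ?_ ?_ ?_
  · intro x hx
    simp only [Finset.mem_filter, box, Fintype.mem_piFinset, Finset.mem_range, Fin.sum_univ_castSucc] at hx ⊢
    obtain ⟨⟨h1, h2⟩, h3, h4⟩ := hx
    refine ⟨h3, ?_⟩
    have := h1 (Fin.last m)
    simp only [Nat.add_sub_cancel]
    rw [add_mul, one_mul] at h2
    rw [Nat.div_eq_iff ht]
    constructor <;> omega
  · intro a ha b hb h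
    simp only [Finset.mem_filter, Fin.sum_univ_castSucc] at ha hb
    funext i
    have h' : ∀ i : Fin m, a i.castSucc = b i.castSucc := fun i => congrFun h i
    refine Fin.lastCases ?_ h' i
    have e1 := ha.1.2
    have e2 := hb.1.2
    simp only [h'] at e1
    omega
  · intro x hx
    simp only [Finset.mem_filter, box, Fintype.mem_piFinset, Finset.mem_range] at hx
    obtain ⟨h1, h2⟩ := hx
    simp only [Nat.add_sub_cancel] at h2
    rw [Nat.div_eq_iff ht] at h2
    refine ⟨Fin.snoc (α := fun _ => ℕ) x ((k+1)*t - ∑ i, x i), ?_, ?_⟩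
    · simp only [Finset.mem_filter, box, Fintype.mem_piFinset, Finset.mem_range, Fin.sum_univ_castSucc, Fin.snoc_castSucc, Fin.snoc_last]
      rw [add_mul, one_mul]
      refine ⟨⟨?_, by omega⟩, h1, by omega⟩
      intro i
      refine Fin.lastCases ?_ ?_ i
      · simp; omega
      · intro i; simp; have := h1 i; omega
    · funext i; simp

lemma card_slice {m t s c : ℕ} (i : Fin (m+2)) :
    ((box (m+2) t).filter (fun x => ∑ i, x i = s ∧ x i = c)).card ≤ t ^ m := by
  have : (box m t).card = t ^ m := by simp [box]
  rw [← this]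
  refine Finset.card_le_card_of_injOn (fun x j => x (i.succAbove j.succ)) ?_ ?_
  · intro x hx
    simp only [Finset.coe_filter, Set.mem_ofPred_eq, box, Fintype.mem_piFinset, Finset.mem_range, Finset.mem_coe] at hx ⊢
    intro j; exact hx.1 _
  · intro a ha b hb h
    simp only [Finset.coe_filter, Set.mem_ofPred_eq] at ha hb
    have h' : ∀ j : Fin m, a (i.succAbove j.succ) = b (i.succAbove j.succ) := fun j => congrFun h j
    obtain ⟨_, e1, e2⟩ := ha
    obtain ⟨_, e3, e4⟩ := hb
    rw [Fin.sum_univ_succAbove _ i, Fin.sum_univ_succ] at e1 e3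
    simp only [h'] at e1
    have e5 : a (i.succAbove 0) = b (i.succAbove 0) := by omega
    funext j
    refine Fin.succAboveCases i (by omega) ?_ j
    intro j
    exact Fin.cases e5 h' j

lemma card_diag {m t : ℕ} (i j : Fin (m+1)) (hij : i ≠ j) :
    ((box (m+1) t).filter (fun x => x i = x j)).card ≤ t ^ m := by
  have : (box m t).card = t ^ m := by simp [box]
  rw [← this]
  refine Finset.card_le_card_of_injOn (fun x j => x (i.succAbove j)) ?_ ?_
  · intro x hx
    simp only [Finset.coe_filter, Set.mem_ofPred_eq, box, Fintype.mem_piFinset, Finset.mem_range, Finset.mem_coe] at hx ⊢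
    intro j; exact hx.1 _
  · intro a ha b hb h
    simp only [Finset.coe_filter, Set.mem_ofPred_eq] at ha hb
    have h' : ∀ j : Fin m, a (i.succAbove j) = b (i.succAbove j) := fun j => congrFun h j
    obtain ⟨l, rfl⟩ := Fin.exists_succAbove_eq hij.symm
    funext j
    refine Fin.succAboveCases i ?_ h' j
    rw [ha.2, hb.2, h']

lemma card_inj {m t d : ℕ} :
    (((box m t).filter (fun y => desF y = d)).filter (fun y => Function.Injective y)).card
      = eulerian m d * t.choose m := by
  have h1 : eulerian m d = ((Finset.univ : Finset (Equiv.Perm (Fin m))).filter (fun σ => descNum σ = d)).card := by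
    unfold eulerian
    rw [Nat.card_eq_fintype_card, Fintype.card_subtype]
  have h2 : t.choose m = (Finset.powersetCard m (Finset.range t)).card := by simp
  rw [h1, h2, ← Finset.card_product]
  symm
  refine Finset.card_bij (fun p hp => fun i => p.2.orderEmbOfFin (k := m)
    (Finset.mem_powersetCard.1 (Finset.mem_product.1 hp).2).2 (p.1 i)) ?_ ?_ ?_
  · rintro ⟨σ, s⟩ hp
    simp only [Finset.mem_product, Finset.mem_filter, Finset.mem_univ, true_and, Finset.mem_powersetCard] at hp
    obtain ⟨h1, h2, h3⟩ := hp
    simp only [Finset.mem_filter, box, Fintype.mem_piFinset]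
    refine ⟨⟨fun i => h2 (Finset.orderEmbOfFin_mem _ _ _), ?_⟩, ?_⟩
    · refine Eq.trans ?_ h1
      unfold desF descNum
      simp
    · intro a b h
      simpa using h
  · rintro ⟨σ, s⟩ hp ⟨σ', s'⟩ hp' h
    have c1 := (Finset.mem_powersetCard.1 (Finset.mem_product.1 hp).2).2
    have c2 := (Finset.mem_powersetCard.1 (Finset.mem_product.1 hp').2).2
    simp only at h c1 c2
    have hs : s = s' := by
      have e1 : Set.range (fun i => s.orderEmbOfFin c1 (σ i)) = s := by
        rw [← Finset.range_orderEmbOfFin s c1]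
        exact σ.surjective.range_comp (s.orderEmbOfFin c1)
      have e2 : Set.range (fun i => s'.orderEmbOfFin c2 (σ' i)) = s' := by
        rw [← Finset.range_orderEmbOfFin s' c2]
        exact σ'.surjective.range_comp (s'.orderEmbOfFin c2)
      rw [h, e2] at e1
      exact_mod_cast e1.symm
    subst hs
    have : σ = σ' := by
      refine Equiv.ext fun i => ?_
      have := congrFun h i
      simpa using this
    rw [this]
  · intro y hy
    simp only [Finset.mem_filter, box, Fintype.mem_piFinset] at hy
    obtain ⟨⟨h1, h2⟩, h3⟩ := hy
    have hc : (Finset.univ.image y).card = m := by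
      rw [Finset.card_image_of_injective _ h3]; simp
    have hm : ∀ i, y i ∈ Finset.univ.image y := fun i => Finset.mem_image_of_mem _ (Finset.mem_univ _)
    let f : Fin m → Fin m := fun i => ((Finset.univ.image y).orderIsoOfFin hc).symm ⟨y i, hm i⟩
    have hf : Function.Injective f := by
      intro a b h
      have := ((Finset.univ.image y).orderIsoOfFin hc).symm.injective h
      exact h3 (by simpa using this)
    let σ : Equiv.Perm (Fin m) := Equiv.ofBijective f (Finite.injective_iff_bijective.1 hf)
    have key : ∀ i, (Finset.univ.image y).orderEmbOfFin hc (σ i) = y i := by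
      intro i
      show (Finset.univ.image y).orderEmbOfFin hc (f i) = y i
      rw [← Finset.coe_orderIsoOfFin_apply]
      simp [f]
    refine ⟨(σ, Finset.univ.image y), ?_, ?_⟩
    · simp only [Finset.mem_product, Finset.mem_filter, Finset.mem_univ, true_and, Finset.mem_powersetCard]
      refine ⟨?_, ?_, hc⟩
      · rw [← h2]
        unfold desF descNum
        simp only [← key]
        simp
      · intro a ha
        obtain ⟨i, _, rfl⟩ := Finset.mem_image.1 ha
        exact h1 i
    · funext i; exact key i

lemma bounds {m t k : ℕ} (ht : 0 < t) (hk : 0 < k) :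
    eulerian (m+1) (k-1) * t.choose (m+1) ≤
      ((box (m+2) (t+1)).filter (fun x => ∑ i, x i = k * t)).card ∧
    ((box (m+2) (t+1)).filter (fun x => ∑ i, x i = k * t)).card ≤
      eulerian (m+1) (k-1) * t.choose (m+1) + ((m+1) + 1 + (m+1)*(m+1)) * (t+1)^m := by
  have e1 := Finset.card_filter_add_card_filter_not (s := (box (m+2) (t+1)).filter (fun x => ∑ i, x i = k * t))
    (fun x => (∀ i : Fin (m+1), x i.castSucc < t) ∧ 0 < x (Fin.last (m+1)))
  have e2 := Finset.card_filter_add_card_filter_not (s := (box (m+1) t).filter (fun y => desF y = k - 1))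
    (fun y => Function.Injective y)
  rw [card_inj] at e2
  rw [card_P' ht hk, card_E ht] at e1
  have b1 : (((box (m+2) (t+1)).filter (fun x => ∑ i, x i = k * t)).filter
    (fun x => ¬ ((∀ i : Fin (m+1), x i.castSucc < t) ∧ 0 < x (Fin.last (m+1))))).card
      ≤ ((m+1)+1) * (t+1)^m := by
    calc _ ≤ (((Finset.univ : Finset (Fin (m+1))).biUnion (fun i =>
          (box (m+2) (t+1)).filter (fun x => ∑ i, x i = k * t ∧ x i.castSucc = t))) ∪
          (box (m+2) (t+1)).filter (fun x => ∑ i, x i = k * t ∧ x (Fin.last _) = 0)).card := by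
          apply Finset.card_le_card
          intro x hx
          simp only [Finset.mem_filter] at hx
          obtain ⟨⟨h1, h2⟩, h3⟩ := hx
          simp only [Finset.mem_union, Finset.mem_biUnion, Finset.mem_filter, Finset.mem_univ, true_and]
          by_cases h : x (Fin.last _) = 0
          · exact Or.inr ⟨h1, h2, h⟩
          · left
            have : ¬ ∀ i : Fin (m+1), x i.castSucc < t := fun h' => h3 ⟨h', by omega⟩
            push Not at this
            obtain ⟨i, hi⟩ := this
            refine ⟨i, h1, h2, ?_⟩
            simp only [box, Fintype.mem_piFinset, Finset.mem_range] at h1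
            have := h1 i.castSucc
            omega
      _ ≤ _ := by
          refine (Finset.card_union_le _ _).trans ?_
          rw [add_mul, one_mul]
          refine Nat.add_le_add ?_ (card_slice _)
          refine (Finset.card_biUnion_le_card_mul _ _ ((t+1)^m) (fun i _ => card_slice _)).trans ?_
          simp
  have b2 : (((box (m+1) t).filter (fun y => desF y = k - 1)).filter
    (fun y => ¬ Function.Injective y)).card ≤ ((m+1)*(m+1)) * (t+1)^m := by
    calc _ ≤ ((Finset.univ.filter (fun p : Fin (m+1) × Fin (m+1) => p.1 ≠ p.2)).biUnion (fun p =>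
          (box (m+1) t).filter (fun x => x p.1 = x p.2))).card := by
          apply Finset.card_le_card
          intro x hx
          simp only [Finset.mem_filter] at hx
          obtain ⟨⟨h1, h2⟩, h3⟩ := hx
          unfold Function.Injective at h3
          push Not at h3
          obtain ⟨a, b, h, h'⟩ := h3
          simp only [Finset.mem_biUnion, Finset.mem_filter, Finset.mem_univ, true_and]
          exact ⟨(a, b), h', h1, h⟩
      _ ≤ _ := by
          refine (Finset.card_biUnion_le_card_mul _ _ (t^m) ?_).trans ?_
          · intro p hp
            exact card_diag _ _ (Finset.mem_filter.1 hp).2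
          · refine Nat.mul_le_mul ?_ (Nat.pow_le_pow_left (by omega) _)
            refine (Finset.card_filter_le _ _).trans ?_
            simp
  rw [add_mul _ _ ((t+1)^m)]
  omega

open Filter Polynomial in
lemma poly_bound (q : ℚ[X]) (m : ℕ) (c : ℚ) (h0 : ∀ t : ℕ, 0 < t → 0 ≤ q.eval (t : ℚ))
    (h1 : ∀ t : ℕ, 0 < t → q.eval (t : ℚ) ≤ c * ((t : ℚ) + 1) ^ m) : q.coeff (m+1) = 0 := by
  by_contra hne
  have hdq : ((m + 1 : ℕ) : WithBot ℕ) ≤ q.degree := le_degree_of_ne_zero hne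
  have hq0 : (0 : WithBot ℕ) < q.degree := lt_of_lt_of_le (by exact_mod_cast Nat.succ_pos m) hdq
  have hg : (C c * (X + 1) ^ m : ℚ[X]).degree < q.degree := by
    refine lt_of_lt_of_le ?_ hdq
    refine lt_of_le_of_lt (b := (m : WithBot ℕ)) ?_ (by exact_mod_cast Nat.lt_succ_self m)
    refine (degree_mul_le _ _).trans ?_
    have hC : (C c : ℚ[X]).degree ≤ 0 := degree_C_le
    have hP := degree_pow_le (X + 1 : ℚ[X]) m
    have : (X + 1 : ℚ[X]).degree = 1 := by
      simpa using degree_X_add_C (1 : ℚ)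
    rw [this] at hP
    calc _ ≤ 0 + m • (1 : WithBot ℕ) := add_le_add hC hP
      _ = _ := by simp
  have hcast : Tendsto (fun t : ℕ => (t : ℚ)) atTop atTop := tendsto_natCast_atTop_atTop
  rcases le_total 0 q.leadingCoeff with hl | hl
  · have hr := tendsto_atTop_of_leadingCoeff_nonneg (q - C c * (X + 1) ^ m)
      (by rwa [degree_sub_eq_left_of_degree_lt hg]) (by rwa [leadingCoeff_sub_of_degree_lt hg])
    obtain ⟨t, ht, ht'⟩ := (((hr.comp hcast).eventually_gt_atTop 0).and (eventually_gt_atTop 0)).exists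
    have := h1 t ht'
    simp at ht
    linarith
  · have hr := tendsto_atTop_of_leadingCoeff_nonneg (-q) (by rwa [degree_neg])
      (by rw [leadingCoeff_neg]; linarith)
    obtain ⟨t, ht, ht'⟩ := (((hr.comp hcast).eventually_gt_atTop 0).and (eventually_gt_atTop 0)).exists
    have := h0 t ht'
    simp at ht
    linarith

theorem stmt16 (n k : ℕ) (hk0 : 0 < k) (hkn : k ≤ n)
    (p : Polynomial ℚ)
    (hp : ∀ t : ℕ, 0 < t → p.eval (t : ℚ)
      = ((Fintype.piFinset (fun _ : Fin n => Finset.range (t + 1))).filter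
          (fun x => ∑ i, x i = k * t)).card) :
    p.coeff (n - 1) = (eulerian (n - 1) (k - 1) : ℚ) / ((n - 1).factorial : ℚ) := by
  rcases n with _ | _ | m
  · omega
  · obtain rfl : k = 1 := by omega
    have he : eulerian 0 0 = 1 := by
      unfold eulerian
      rw [Nat.card_eq_one_iff_unique]
      exact ⟨⟨fun a b => Subtype.ext (Subsingleton.elim _ _)⟩, ⟨⟨1, by simp [descNum]⟩⟩⟩
    have hp1 : ∀ t : ℕ, 0 < t → p.eval (t : ℚ) = 1 := by
      intro t ht
      rw [hp t ht]
      norm_cast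
      rw [Finset.card_eq_one]
      refine ⟨fun _ => t, ?_⟩
      ext x
      simp only [Finset.mem_filter, Fintype.mem_piFinset, Finset.mem_range, Finset.mem_singleton]
      constructor
      · rintro ⟨_, h⟩
        funext i
        have h0 : i = 0 := Fin.ext (by have := i.2; simp)
        rw [h0]
        simpa using h
      · rintro rfl
        simp
    have : p = 1 := by
      apply Polynomial.eq_of_infinite_eval_eq
      refine Set.Infinite.mono (s := Set.range (fun t : ℕ => ((t + 1 : ℕ) : ℚ))) ?_ ?_
      · rintro _ ⟨t, rfl⟩
        show p.eval _ = Polynomial.eval _ 1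
        rw [hp1 (t+1) (by omega)]; simp
      · apply Set.infinite_range_of_injective
        intro a b h
        have : a + 1 = b + 1 := by
          have h' : ((a + 1 : ℕ) : ℚ) = ((b + 1 : ℕ) : ℚ) := h
          exact_mod_cast h'
        omega
    simp [this, he]
  · simp only [Nat.add_sub_cancel]
    have key := poly_bound
      (p - Polynomial.C ((eulerian (m+1) (k-1) : ℚ) / ((m+1).factorial : ℚ)) * descPochhammer ℚ (m+1)) m
      (((m+1) + 1 + (m+1)*(m+1) : ℕ) : ℚ)
    have hf : ((m+1).factorial : ℚ) ≠ 0 := by exact_mod_cast Nat.factorial_ne_zero _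
    have hev : ∀ t : ℕ, 0 < t → (p - Polynomial.C ((eulerian (m+1) (k-1) : ℚ) / ((m+1).factorial : ℚ)) * descPochhammer ℚ (m+1)).eval (t : ℚ)
        = (((box (m+2) (t+1)).filter (fun x => ∑ i, x i = k * t)).card : ℚ)
          - ((eulerian (m+1) (k-1) * t.choose (m+1) : ℕ) : ℚ) := by
      intro t ht
      rw [Polynomial.eval_sub, hp t ht, Polynomial.eval_mul, Polynomial.eval_C,
        descPochhammer_eval_eq_descFactorial, Nat.descFactorial_eq_factorial_mul_choose]
      push_cast
      congr 1
      field_simp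
    have hz := key ?_ ?_
    · rw [Polynomial.coeff_sub, Polynomial.coeff_C_mul] at hz
      have hm := monic_descPochhammer ℚ (m+1)
      have hc : (descPochhammer ℚ (m+1)).coeff (m+1) = 1 := by
        have := hm.coeff_natDegree
        rwa [descPochhammer_natDegree] at this
      rw [hc] at hz
      linarith
    · intro t ht
      rw [hev t ht, sub_nonneg]
      exact_mod_cast (bounds ht hk0).1
    · intro t ht
      rw [hev t ht, sub_le_iff_le_add']
      exact_mod_cast (bounds ht hk0).2
end
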